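/- arXiv:2603.13535 — 3 statements merged into one kernel-verified Lean document; each statement's English description precedes it below -/
import Mathlib

section
/- Let (i,j) ∈ E be an edge of a finite connected simple graph G with ρ_min ≥ 2, let α_i, α_j ∈ [0,1), and suppose c_BF(i,j) ≤ ζ for some ζ ∈ ℝ. Set b(ζ) = [ζ − 𝔖(i,j)]₊, △_max = min{ρ_min − 1, b(ζ)/𝔗(i,j)}, þ⋆ = ρ_max·(ρ_max − 1), and for t ∈ ℝ define A_u(t) = (ρ_u − 1 − t)·w_u for u ∈ {i,j}, A_min(t) = min{A_i(t), A_j(t)}, B(t) = (þ⋆/Σ)·(b(ζ) − 𝔗(i,j)·t), D(t) = (ρ_i + ρ_j − 2 − 2t)/Σ, C(t) = min{t·|w_i − w_j|, A_i(t) + A_j(t)}, and Ψ̂(t) = −1 + 2(z_i + z_j) + (r_i + r̄_i + r_j + r̄_j) + 2·w_∧·t + [min{A_min(t), B(t), D(t)}]₊ + C(t), where w_∧ = min{w_i, w_j}. Then c_OR(i,j) ≤ max over t ∈ [0, △_max] of Ψ̂(t). -/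
namespace Curv

open Finset

noncomputable section

variable {V : Type*} [Fintype V] [DecidableEq V] (G : SimpleGraph V) [DecidableRel G.Adj]

/-- `μ` is a probability distribution on the (finite) vertex set. -/
def IsProb (μ : V → ℝ) : Prop := (∀ x, 0 ≤ μ x) ∧ ∑ x, μ x = 1

/-- `π` is a coupling of `μ` and `ν`. -/
def IsCoupling (μ ν : V → ℝ) (π : V → V → ℝ) : Prop :=
  (∀ x y, 0 ≤ π x y) ∧ (∀ x, ∑ y, π x y = μ x) ∧ (∀ y, ∑ x, π x y = ν y)

/-- Transport cost of a plan `π` with respect to the shortest-path graph distance. -/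
def cost (π : V → V → ℝ) : ℝ := ∑ x, ∑ y, (G.dist x y : ℝ) * π x y

/-- Wasserstein-1 distance between two distributions on the vertex set. -/
def W1 (μ ν : V → ℝ) : ℝ := sInf {c : ℝ | ∃ π, IsCoupling μ ν π ∧ cost G π = c}

/-- Dirac mass at `u`. -/
def dirac (u : V) : V → ℝ := fun x => if x = u then 1 else 0

/-- Uniform distribution on the neighbours of `u`. -/
def unif (u : V) : V → ℝ := fun x => if G.Adj u x then ((G.degree u : ℝ))⁻¹ else 0

/-- Lazy random-walk measure with laziness parameter `α`. -/
def mGen (α : ℝ) (u : V) : V → ℝ := fun x => α * dirac u x + (1 - α) * unif G u x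

/-- Canonical laziness `1/(deg u + 1)`. -/
def alphaL (u : V) : ℝ := ((G.degree u : ℝ) + 1)⁻¹

/-- The lazy random-walk measure `m_u`. -/
def mLazy (u : V) : V → ℝ := mGen G (alphaL G u) u

/-- Ollivier–Ricci curvature (lazy). -/
def cOR (i j : V) : ℝ := 1 - W1 G (mLazy G i) (mLazy G j)

/-- Non-lazy Ollivier–Ricci curvature. -/
def cOR0 (i j : V) : ℝ := 1 - W1 G (unif G i) (unif G j)

/-- Positive part `[x]₊`. -/
def pos (x : ℝ) : ℝ := max x 0

/-- Triangle count `△(u,v)`. -/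
def tri (u v : V) : ℕ := (G.neighborFinset u ∩ G.neighborFinset v).card

/-- Unique neighbours `N(u) \ (N(v) ∪ {v})`. -/
def uniq (u v : V) : Finset V := G.neighborFinset u \ insert v (G.neighborFinset v)

/-- `ξ_u(u,v)`: unique neighbours of `u` having a neighbour among unique neighbours of `v`. -/
def xiSet (u v : V) : Finset V := (uniq G u v).filter fun k => ∃ w ∈ uniq G v u, G.Adj k w

/-- `Ξ_uv`. -/
def Xi (u v : V) : ℕ := (xiSet G u v).card + (xiSet G v u).card

/-- `□̃(k,u,v) = |N(k) ∩ (N(v)\(N(u)∪{u}))|`. -/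
def boxT (k u v : V) : ℕ := (G.neighborFinset k ∩ uniq G v u).card

/-- `ϖ_max(u,v)`. -/
def varpi (u v : V) : ℕ :=
  max (((G.neighborFinset u).erase v).sup fun k => boxT G k u v)
      (((G.neighborFinset v).erase u).sup fun w => boxT G w v u)

/-- `þ_max(u,v) = ϖ_max(u,v)·max{ρ_u,ρ_v}`. -/
def thMax (u v : V) : ℕ := varpi G u v * max (G.degree u) (G.degree v)

/-- Edgewise 4-cycle coefficient `C₄(u,v)`. -/
def C4 (u v : V) : ℝ := if 0 < Xi G u v then (Xi G u v : ℝ) / (thMax G u v : ℝ) else 0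

/-- Graph-wide 4-cycle constant `C₄(G)`. -/
def C4Graph : ℝ := sSup {x : ℝ | ∃ u v, G.Adj u v ∧ x = C4 G u v}

def rhoMin (i j : V) : ℕ := min (G.degree i) (G.degree j)

def rhoMax (i j : V) : ℕ := max (G.degree i) (G.degree j)

/-- `𝔖(i,j)`. -/
def frakS (i j : V) : ℝ := 2 / (G.degree i : ℝ) + 2 / (G.degree j : ℝ) - 2

/-- `𝔗(i,j)`. -/
def frakT (i j : V) : ℝ := 2 / (rhoMax G i j : ℝ) + 1 / (rhoMin G i j : ℝ)

/-- `𝔎(i,j)`. -/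
def frakK (i j : V) : ℝ := 1 - 1 / (rhoMin G i j : ℝ) - 1 / (rhoMax G i j : ℝ)

/-- `Z_min(i,j)`. -/
def Zmin (i j : V) : ℝ := (tri G i j : ℝ) / (rhoMin G i j : ℝ)

/-- `Z_max(i,j)`. -/
def Zmax (i j : V) : ℝ := (tri G i j : ℝ) / (rhoMax G i j : ℝ)

/-- Balanced Forman curvature. -/
def cBF (i j : V) : ℝ :=
  if rhoMin G i j = 1 then 0
  else frakS G i j + frakT G i j * (tri G i j : ℝ) + C4 G i j

/-- `M` is a matching in the cross-edge bipartite graph `B_ij`. -/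
def IsCrossMatching (i j : V) (M : Finset (V × V)) : Prop :=
  (∀ p ∈ M, p.1 ∈ uniq G i j ∧ p.2 ∈ uniq G j i ∧ G.Adj p.1 p.2) ∧
  (∀ p ∈ M, ∀ q ∈ M, p ≠ q → p.1 ≠ q.1 ∧ p.2 ≠ q.2)

/-- Maximum matching size `𝔪(i,j)` in the cross-edge bipartite graph. -/
def matchNum (i j : V) : ℕ :=
  sSup {n : ℕ | ∃ M : Finset (V × V), IsCrossMatching G i j M ∧ M.card = n}

/-- `𝒮(i,j) = 𝔪(i,j)/ρ_max`. -/
def SS (i j : V) : ℝ := (matchNum G i j : ℝ) / (rhoMax G i j : ℝ)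

/-- Lazy per-neighbour weight `w_u = (1-α)/ρ_u`. -/
def wA (α : ℝ) (u : V) : ℝ := (1 - α) / (G.degree u : ℝ)

/-- Lazy conductance sum `Σ`. -/
def SigmaA (αi αj : ℝ) (i j : V) : ℝ :=
  (G.degree i : ℝ) / (1 - αi) + (G.degree j : ℝ) / (1 - αj)

/-- `Const_α`. -/
def ConstA (αi αj : ℝ) (i j : V) : ℝ :=
  -1 + 2 * (min αi ((1 - αj) / (G.degree j : ℝ)) + min αj ((1 - αi) / (G.degree i : ℝ)))
    + (pos (αi - (1 - αj) / (G.degree j : ℝ)) + pos ((1 - αj) / (G.degree j : ℝ) - αi)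
      + pos (αj - (1 - αi) / (G.degree i : ℝ)) + pos ((1 - αi) / (G.degree i : ℝ) - αj))
    + ((G.degree i : ℝ) + (G.degree j : ℝ) - 2) / SigmaA G αi αj i j

/-- `Slope_α`. -/
def SlopeA (αi αj : ℝ) (i j : V) : ℝ := wA G αi i + wA G αj j - 2 / SigmaA G αi αj i j

/-- `α_⋆`: `α_min` when the non-lazy curvature is nonnegative, `α_max` otherwise. -/
def alphaStar (i j : V) : ℝ :=
  if 0 ≤ cOR0 G i j then min (alphaL G i) (alphaL G j) else max (alphaL G i) (alphaL G j)

/-- `Δ_ij(α) = α_max − α_min` for the canonical laziness. -/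
def DeltaL (i j : V) : ℝ := max (alphaL G i) (alphaL G j) - min (alphaL G i) (alphaL G j)

/-- BF budget `b(ζ) = [ζ − 𝔖]₊`. -/
def bBudget (i j : V) (z : ℝ) : ℝ := pos (z - frakS G i j)

/-- `þ⋆ = ρ_max (ρ_max − 1)`. -/
def thStar (i j : V) : ℝ := (rhoMax G i j : ℝ) * ((rhoMax G i j : ℝ) - 1)

/-- `△_max = min{ρ_min − 1, b(ζ)/𝔗}`. -/
def triBound (i j : V) (z : ℝ) : ℝ :=
  min ((rhoMin G i j : ℝ) - 1) (bBudget G i j z / frakT G i j)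

/-- `A_u(t) = (ρ_u − 1 − t)·w_u`. -/
def Afun (α : ℝ) (u : V) (t : ℝ) : ℝ := ((G.degree u : ℝ) - 1 - t) * wA G α u

/-- The piecewise-affine upper envelope `Ψ̂(t)`. -/
def PsiHat (αi αj : ℝ) (i j : V) (z t : ℝ) : ℝ :=
  -1 + 2 * (min αi ((1 - αj) / (G.degree j : ℝ)) + min αj ((1 - αi) / (G.degree i : ℝ)))
    + (pos (αi - (1 - αj) / (G.degree j : ℝ)) + pos ((1 - αj) / (G.degree j : ℝ) - αi)
      + pos (αj - (1 - αi) / (G.degree i : ℝ)) + pos ((1 - αi) / (G.degree i : ℝ) - αj))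
    + 2 * min (wA G αi i) (wA G αj j) * t
    + pos (min (min (Afun G αi i t) (Afun G αj j t))
        (min (thStar G i j / SigmaA G αi αj i j * (bBudget G i j z - frakT G i j * t))
          (((G.degree i : ℝ) + (G.degree j : ℝ) - 2 - 2 * t) / SigmaA G αi αj i j)))
    + min (t * |wA G αi i - wA G αj j|) (Afun G αi i t + Afun G αj j t)

def ind (S : Finset V) (x : V) : ℝ := if x ∈ S then 1 else 0

lemma row_sum {μ ν : V → ℝ} {π : V → V → ℝ} (h : IsCoupling μ ν π) (S : Finset V) :
    ∑ x, ∑ y, ind S x * π x y = ∑ x ∈ S, μ x := by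
  simp_rw [← Finset.mul_sum, h.2.1, ind, ite_mul, one_mul, zero_mul]
  simp

lemma col_sum {μ ν : V → ℝ} {π : V → V → ℝ} (h : IsCoupling μ ν π) (S : Finset V) :
    ∑ x, ∑ y, ind S y * π x y = ∑ y ∈ S, ν y := by
  rw [Finset.sum_comm]
  simp_rw [← Finset.mul_sum, h.2.2, ind, ite_mul, one_mul, zero_mul]
  simp

lemma mGen_self (α : ℝ) (u : V) : mGen G α u u = α := by
  simp [mGen, dirac, unif]

lemma mGen_adj (α : ℝ) {u x : V} (h : G.Adj u x) : mGen G α u x = wA G α u := by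
  have : x ≠ u := h.ne'
  simp [mGen, dirac, unif, this, h, wA, div_eq_mul_inv]

lemma mGen_else (α : ℝ) {u x : V} (h : ¬ G.Adj u x) (hx : x ≠ u) : mGen G α u x = 0 := by
  simp [mGen, dirac, unif, hx, h]

lemma mGen_sum (α : ℝ) {u : V} {S : Finset V} (h : ∀ x ∈ S, G.Adj u x) :
    ∑ x ∈ S, mGen G α u x = (S.card : ℝ) * wA G α u := by
  rw [Finset.sum_congr rfl (fun x hx => mGen_adj G α (h x hx))]
  simp

lemma mGen_total (α : ℝ) {u : V} (h : G.degree u ≠ 0) : ∑ x, mGen G α u x = 1 := by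
  have h' : (G.degree u : ℝ) ≠ 0 := by exact_mod_cast h
  have hf : (Finset.univ.filter (fun x => G.Adj u x)).card = G.degree u := by
    rw [← G.card_neighborFinset_eq_degree, G.neighborFinset_eq_filter]
  simp only [mGen, dirac, unif, Finset.sum_add_distrib, ← Finset.mul_sum]
  rw [← Finset.sum_filter (fun x => G.Adj u x)]
  simp [hf, h']

lemma mGen_nonneg {α : ℝ} (h : α ∈ Set.Ico (0:ℝ) 1) (u x : V) : 0 ≤ mGen G α u x := by
  have h1 := h.1
  have h2 : 0 ≤ 1 - α := by linarith [h.2]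
  unfold mGen dirac unif
  refine add_nonneg (mul_nonneg h1 ?_) (mul_nonneg h2 ?_) <;> split_ifs <;> positivity

lemma prod_coupling {μ ν : V → ℝ} (hm : ∀ x, 0 ≤ μ x) (hn : ∀ x, 0 ≤ ν x)
    (hm1 : ∑ x, μ x = 1) (hn1 : ∑ x, ν x = 1) : IsCoupling μ ν (fun x y => μ x * ν y) := by
  refine ⟨fun x y => mul_nonneg (hm x) (hn y), fun x => ?_, fun y => ?_⟩
  · rw [← Finset.mul_sum, hn1, mul_one]
  · rw [← Finset.sum_mul, hm1, one_mul]

lemma coupling_le {μ ν : V → ℝ} {π : V → V → ℝ} (h : IsCoupling μ ν π) {x y : V}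
    (hp : π x y ≠ 0) : μ x ≠ 0 ∧ ν y ≠ 0 := by
  have h0 := lt_of_le_of_ne (h.1 x y) (Ne.symm hp)
  constructor
  · rw [← h.2.1 x]
    exact (lt_of_lt_of_le h0 (Finset.single_le_sum (f := fun y => π x y)
      (fun y _ => h.1 x y) (Finset.mem_univ y))).ne'
  · rw [← h.2.2 y]
    exact (lt_of_lt_of_le h0 (Finset.single_le_sum (f := fun x => π x y)
      (fun x _ => h.1 x y) (Finset.mem_univ x))).ne'

lemma card_uniq {u v : V} (h : G.Adj u v) :
    ((uniq G u v).card : ℝ) = (G.degree u : ℝ) - 1 - (tri G u v : ℝ) := by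
  have h1 : (uniq G u v) = (G.neighborFinset u \ G.neighborFinset v).erase v := by
    ext x; simp [uniq]; tauto
  have hv : v ∈ G.neighborFinset u \ G.neighborFinset v := by simp [h]
  have h2 := Finset.card_sdiff_add_card_inter (G.neighborFinset u) (G.neighborFinset v)
  rw [G.card_neighborFinset_eq_degree] at h2
  have h3 := Finset.card_erase_add_one hv
  rw [← h1] at h3
  have : (uniq G u v).card + 1 + tri G u v = G.degree u := by unfold tri; omega
  rw [← this]; push_cast; ring

lemma boxT_le {k u v : V} (h : G.Adj u v) : boxT G k u v ≤ rhoMax G u v - 1 := by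
  have h1 : boxT G k u v ≤ (uniq G v u).card := Finset.card_le_card Finset.inter_subset_right
  have h2 : uniq G v u ⊆ (G.neighborFinset v).erase u := by
    intro x; simp [uniq]; tauto
  have h3 := Finset.card_le_card h2
  rw [Finset.card_erase_of_mem (by simpa using h.symm), G.card_neighborFinset_eq_degree] at h3
  have : G.degree v ≤ rhoMax G u v := le_max_right _ _
  omega

lemma varpi_le {u v : V} (h : G.Adj u v) : varpi G u v ≤ rhoMax G u v - 1 := by
  refine max_le (Finset.sup_le fun k _ => boxT_le G h) (Finset.sup_le fun k _ => ?_)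
  have := boxT_le G (k := k) h.symm
  rwa [rhoMax, max_comm] at this

lemma varpi_pos {u v : V} (h : 0 < Xi G u v) : 0 < varpi G u v := by
  have key : ∀ a b : V, (xiSet G a b).Nonempty →
      0 < ((G.neighborFinset a).erase b).sup fun k => boxT G k a b := by
    rintro a b ⟨k, hk⟩
    simp only [xiSet, Finset.mem_filter] at hk
    obtain ⟨hk, w, hw, hkw⟩ := hk
    have hk' : k ∈ (G.neighborFinset a).erase b := by
      simp [uniq] at hk ⊢; tauto
    refine lt_of_lt_of_le ?_ (Finset.le_sup (f := fun k => boxT G k a b) hk')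
    exact Finset.card_pos.mpr ⟨w, by simp [hkw, hw]⟩
  unfold Xi at h
  rcases Nat.eq_zero_or_pos (xiSet G u v).card with h0 | h0
  · exact lt_max_of_lt_right (key v u (Finset.card_pos.mp (by omega)))
  · exact lt_max_of_lt_left (key u v (Finset.card_pos.mp h0))

lemma Xi_le {u v : V} (h : G.Adj u v) : 0 ≤ C4 G u v ∧ (Xi G u v : ℝ) ≤ thStar G u v * C4 G u v := by
  unfold C4
  split_ifs with hx
  · have hp := varpi_pos G hx
    have hle := varpi_le G h
    have hr : 1 ≤ rhoMax G u v := by omega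
    have hth : (thMax G u v : ℝ) ≤ thStar G u v := by
      have : (varpi G u v : ℝ) ≤ (rhoMax G u v : ℝ) - 1 := by
        rw [le_sub_iff_add_le]; exact_mod_cast (by omega : varpi G u v + 1 ≤ rhoMax G u v)
      unfold thMax thStar
      push_cast
      have e : max (G.degree u : ℝ) (G.degree v : ℝ) = (rhoMax G u v : ℝ) := by
        unfold rhoMax; push_cast; rfl
      rw [e, mul_comm]
      exact mul_le_mul_of_nonneg_left this (by positivity)
    have hth0 : 0 < (thMax G u v : ℝ) := by
      have : 0 < thMax G u v := Nat.mul_pos hp hr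
      exact_mod_cast this
    refine ⟨by positivity, ?_⟩
    calc (Xi G u v : ℝ) = thMax G u v * (Xi G u v / thMax G u v) := by field_simp
      _ ≤ _ := mul_le_mul_of_nonneg_right hth (by positivity)
  · have : Xi G u v = 0 := by omega
    simp [this]

/-- cross-edge indicator -/
def crossI (i j x y : V) : ℝ :=
  if x ∈ uniq G i j ∧ y ∈ uniq G j i ∧ G.Adj x y then 1 else 0

lemma point_bound (hG : G.Connected) {i j : V} (hij : G.Adj i j) {x y : V}
    (hx : x = i ∨ G.Adj i x) (hy : y = j ∨ G.Adj j y) :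
    (2 - (G.dist x y : ℝ)) ≤ ind {i} x + ind {j} x + ind {i} y + ind {j} y + crossI G i j x y
      + min (ind (G.neighborFinset i ∩ G.neighborFinset j) x
          + ind (G.neighborFinset i ∩ G.neighborFinset j) y)
        (2 * (ind (G.neighborFinset i ∩ G.neighborFinset j) x
          * ind (G.neighborFinset i ∩ G.neighborFinset j) y)
          + ind (uniq G i j) x + ind (uniq G j i) y) := by
  have hi : ∀ (S : Finset V) (x : V), 0 ≤ ind S x := by
    intro S x; unfold ind; split_ifs <;> norm_num
  have hc : 0 ≤ crossI G i j x y := by unfold crossI; split_ifs <;> norm_num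
  have hmin0 : 0 ≤ min (ind (G.neighborFinset i ∩ G.neighborFinset j) x
          + ind (G.neighborFinset i ∩ G.neighborFinset j) y)
        (2 * (ind (G.neighborFinset i ∩ G.neighborFinset j) x
          * ind (G.neighborFinset i ∩ G.neighborFinset j) y)
          + ind (uniq G i j) x + ind (uniq G j i) y) := by
    have a1 := hi (G.neighborFinset i ∩ G.neighborFinset j) x
    have a2 := hi (G.neighborFinset i ∩ G.neighborFinset j) y
    have a3 := hi (uniq G i j) x
    have a4 := hi (uniq G j i) y
    refine le_min (by linarith) (by positivity)
  have h1 := hi {i} x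
  have h2 := hi {j} x
  have h3 := hi {i} y
  have h4 := hi {j} y
  have hne := hij.ne
  by_cases hxy : x = y
  · subst hxy
    have hd : G.dist x x = 0 := by simp
    rw [hd]
    by_cases e1 : x = i
    · have : ind {i} x = 1 := by simp [ind, e1]
      push_cast; linarith
    by_cases e2 : x = j
    · have : ind {j} x = 1 := by simp [ind, e2]
      push_cast; linarith
    have hm : x ∈ G.neighborFinset i ∩ G.neighborFinset j := by
      simp; tauto
    have e3 : ind (G.neighborFinset i ∩ G.neighborFinset j) x = 1 := by
      unfold ind; rw [if_pos hm]
    have a3 := hi (uniq G i j) x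
    have a4 := hi (uniq G j i) x
    have : 2 ≤ min (ind (G.neighborFinset i ∩ G.neighborFinset j) x
          + ind (G.neighborFinset i ∩ G.neighborFinset j) x)
        (2 * (ind (G.neighborFinset i ∩ G.neighborFinset j) x
          * ind (G.neighborFinset i ∩ G.neighborFinset j) x)
          + ind (uniq G i j) x + ind (uniq G j i) x) := by
      rw [e3]; exact le_min (by norm_num) (by linarith)
    push_cast; linarith
  · by_cases hadj : G.Adj x y
    · have hd : G.dist x y = 1 := SimpleGraph.dist_eq_one_iff_adj.mpr hadj
      rw [hd]
      push_cast
      by_cases e1 : x = i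
      · have : ind {i} x = 1 := by simp [ind, e1]
        linarith
      by_cases e2 : x = j
      · have : ind {j} x = 1 := by simp [ind, e2]
        linarith
      by_cases e3 : y = i
      · have : ind {i} y = 1 := by simp [ind, e3]
        linarith
      by_cases e4 : y = j
      · have : ind {j} y = 1 := by simp [ind, e4]
        linarith
      have hx' : G.Adj i x := by tauto
      have hy' : G.Adj j y := by tauto
      have ux : G.Adj j x ∨ x ∈ uniq G i j := by
        simp [uniq, hx', e2]; tauto
      have uy : G.Adj i y ∨ y ∈ uniq G j i := by
        simp [uniq, hy', e3]; tauto
      have a1 := hi (G.neighborFinset i ∩ G.neighborFinset j) x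
      have a2 := hi (G.neighborFinset i ∩ G.neighborFinset j) y
      have a3 := hi (uniq G i j) x
      have a4 := hi (uniq G j i) y
      suffices hs : crossI G i j x y = 1 ∨ 1 ≤ min (ind (G.neighborFinset i ∩ G.neighborFinset j) x
          + ind (G.neighborFinset i ∩ G.neighborFinset j) y)
        (2 * (ind (G.neighborFinset i ∩ G.neighborFinset j) x
          * ind (G.neighborFinset i ∩ G.neighborFinset j) y)
          + ind (uniq G i j) x + ind (uniq G j i) y) by
        rcases hs with hs | hs <;> linarith
      have ix : G.Adj j x → ind (G.neighborFinset i ∩ G.neighborFinset j) x = 1 := by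
        intro h; simp [ind, hx', h]
      have iy : G.Adj i y → ind (G.neighborFinset i ∩ G.neighborFinset j) y = 1 := by
        intro h; simp [ind, hy', h]
      have jx : x ∈ uniq G i j → ind (uniq G i j) x = 1 := by
        intro h; simp [ind, h]
      have jy : y ∈ uniq G j i → ind (uniq G j i) y = 1 := by
        intro h; simp [ind, h]
      rcases ux with ux | ux <;> rcases uy with uy | uy
      · right; rw [ix ux, iy uy]; exact le_min (by norm_num) (by linarith)
      · right; rw [ix ux, jy uy]; exact le_min (by linarith) (by linarith)
      · right; rw [iy uy, jx ux]; exact le_min (by linarith) (by linarith)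
      · left; simp [crossI, ux, uy, hadj]
    · have h0 : G.dist x y ≠ 0 := fun h => hxy (hG.dist_eq_zero_iff.mp h)
      have h1' : G.dist x y ≠ 1 := fun h => hadj (SimpleGraph.dist_eq_one_iff_adj.mp h)
      have : (2:ℝ) ≤ G.dist x y := by exact_mod_cast (by omega : 2 ≤ G.dist x y)
      linarith

lemma pair_pos (a b : ℝ) : 2 * min a b + (pos (a - b) + pos (b - a)) = a + b := by
  unfold pos
  rcases le_total a b with h | h
  · rw [min_eq_left h, max_eq_right (by linarith), max_eq_left (by linarith)]; ring
  · rw [min_eq_right h, max_eq_left (by linarith), max_eq_right (by linarith)]; ring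

lemma two_min (a b : ℝ) : 2 * min a b + |a - b| = a + b := by
  rcases le_total a b with h | h
  · rw [min_eq_left h, abs_of_nonpos (by linarith)]; ring
  · rw [min_eq_right h, abs_of_nonneg (by linarith)]; ring

lemma par_le {E a b wi wj : ℝ} (hi : 0 < wi) (hj : 0 < wj) (h1 : E ≤ a * wi) (h2 : E ≤ b * wj) :
    E ≤ (a + b) / (1 / wi + 1 / wj) := by
  rw [le_div_iff₀ (by positivity), mul_add, mul_one_div, mul_one_div]
  have := (div_le_iff₀ hi).mpr h1
  have := (div_le_iff₀ hj).mpr h2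
  linarith

lemma cost_bound (hG : G.Connected) (i j : V) (hij : G.Adj i j)
    (hmin : 2 ≤ rhoMin G i j) (αi αj : ℝ)
    (hαi : αi ∈ Set.Ico (0:ℝ) 1) (hαj : αj ∈ Set.Ico (0:ℝ) 1)
    (z : ℝ) (hBF : cBF G i j ≤ z) (π : V → V → ℝ)
    (hπ : IsCoupling (mGen G αi i) (mGen G αj j) π) :
    1 - cost G π ≤ PsiHat G αi αj i j z (tri G i j) := by
  have hdi : 2 ≤ G.degree i := le_trans hmin (min_le_left _ _)
  have hdj : 2 ≤ G.degree j := le_trans hmin (min_le_right _ _)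
  have hdi' : (0:ℝ) < G.degree i := by exact_mod_cast (by omega : 0 < G.degree i)
  have hdj' : (0:ℝ) < G.degree j := by exact_mod_cast (by omega : 0 < G.degree j)
  have hai : 0 < 1 - αi := by linarith [hαi.2]
  have haj : 0 < 1 - αj := by linarith [hαj.2]
  have hwi : 0 < wA G αi i := by unfold wA; positivity
  have hwj : 0 < wA G αj j := by unfold wA; positivity
  have hSig : SigmaA G αi αj i j = 1 / wA G αi i + 1 / wA G αj j := by
    unfold SigmaA wA; rw [one_div_div, one_div_div]
  have hSig0 : 0 < SigmaA G αi αj i j := by rw [hSig]; positivity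
  set C := G.neighborFinset i ∩ G.neighborFinset j with hC
  have hCi : ∀ x ∈ C, G.Adj i x := by intro x; simp [hC]; tauto
  have hCj : ∀ x ∈ C, G.Adj j x := by intro x; simp [hC]
  have hUi : ∀ x ∈ uniq G i j, G.Adj i x := by intro x; simp [uniq]; tauto
  have hUj : ∀ x ∈ uniq G j i, G.Adj j x := by intro x; simp [uniq]; tauto
  have htot : ∑ x, ∑ y, π x y = 1 := by
    simp_rw [hπ.2.1]; exact mGen_total G αi (by omega)
  have hCc : (C.card : ℝ) = (tri G i j : ℝ) := rfl
  have hcu := card_uniq G hij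
  have hcu' := card_uniq G hij.symm
  have htri : tri G j i = tri G i j := by unfold tri; rw [Finset.inter_comm]
  rw [htri] at hcu'
  -- sums
  have s1 : ∑ x, ∑ y, ind {i} x * π x y = αi := by
    rw [row_sum hπ, Finset.sum_singleton, mGen_self]
  have s2 : ∑ x, ∑ y, ind {j} x * π x y = wA G αi i := by
    rw [row_sum hπ, Finset.sum_singleton, mGen_adj G αi hij]
  have s3 : ∑ x, ∑ y, ind {i} y * π x y = wA G αj j := by
    rw [col_sum hπ, Finset.sum_singleton, mGen_adj G αj hij.symm]
  have s4 : ∑ x, ∑ y, ind {j} y * π x y = αj := by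
    rw [col_sum hπ, Finset.sum_singleton, mGen_self]
  have s5 : ∑ x, ∑ y, ind C x * π x y = tri G i j * wA G αi i := by
    rw [row_sum hπ, mGen_sum G αi hCi, hCc]
  have s6 : ∑ x, ∑ y, ind C y * π x y = tri G i j * wA G αj j := by
    rw [col_sum hπ, mGen_sum G αj hCj, hCc]
  have s7 : ∑ x, ∑ y, ind (uniq G i j) x * π x y = Afun G αi i (tri G i j) := by
    rw [row_sum hπ, mGen_sum G αi hUi, hcu]; rfl
  have s8 : ∑ x, ∑ y, ind (uniq G j i) y * π x y = Afun G αj j (tri G i j) := by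
    rw [col_sum hπ, mGen_sum G αj hUj, hcu']; rfl
  have mono : ∀ f g : V → V → ℝ, (∀ x y, f x y ≤ g x y) →
      ∑ x, ∑ y, f x y * π x y ≤ ∑ x, ∑ y, g x y * π x y := fun f g h =>
    Finset.sum_le_sum fun x _ => Finset.sum_le_sum fun y _ =>
      mul_le_mul_of_nonneg_right (h x y) (hπ.1 x y)
  -- core bound
  obtain ⟨E, hE⟩ : ∃ E, E = ∑ x, ∑ y, crossI G i j x y * π x y := ⟨_, rfl⟩
  obtain ⟨Q, hQ⟩ : ∃ Q, Q = ∑ x, ∑ y, (min (ind C x + ind C y)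
      (2 * (ind C x * ind C y) + ind (uniq G i j) x + ind (uniq G j i) y)) * π x y := ⟨_, rfl⟩
  have core : 2 - cost G π ≤ αi + wA G αi i + wA G αj j + αj + E + Q := by
    have e1 : 2 - cost G π = ∑ x, ∑ y, (2 - (G.dist x y : ℝ)) * π x y := by
      simp only [sub_mul, Finset.sum_sub_distrib, ← Finset.mul_sum, htot, cost]; norm_num
    rw [e1, ← s2, ← s3, ← s1, ← s4, hE, hQ]
    simp only [← Finset.sum_add_distrib, ← add_mul]
    refine Finset.sum_le_sum fun x _ => Finset.sum_le_sum fun y _ => ?_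
    by_cases hp : π x y = 0
    · simp [hp]
    obtain ⟨p1, p2⟩ := coupling_le hπ hp
    have hx : x = i ∨ G.Adj i x := by
      by_contra hcon; push Not at hcon; exact p1 (mGen_else G αi hcon.2 hcon.1)
    have hy : y = j ∨ G.Adj j y := by
      by_contra hcon; push Not at hcon; exact p2 (mGen_else G αj hcon.2 hcon.1)
    have := mul_le_mul_of_nonneg_right (point_bound G hG hij hx hy) (hπ.1 x y)
    linarith
  -- Q
  have q1 : Q ≤ tri G i j * wA G αi i + tri G i j * wA G αj j := by
    rw [hQ, ← s5, ← s6]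
    simp only [← Finset.sum_add_distrib, ← add_mul]
    exact mono _ _ fun x y => min_le_left _ _
  have ind01 : ∀ (S : Finset V) x, 0 ≤ ind S x ∧ ind S x ≤ 1 := by
    intro S x; unfold ind; split_ifs <;> norm_num
  have q2 : Q ≤ 2 * min (wA G αi i) (wA G αj j) * tri G i j
      + (Afun G αi i (tri G i j) + Afun G αj j (tri G i j)) := by
    have r1 : ∑ x, ∑ y, (ind C x * ind C y) * π x y ≤ tri G i j * wA G αi i := by
      rw [← s5]
      exact mono _ _ fun x y => mul_le_of_le_one_right (ind01 C x).1 (ind01 C y).2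
    have r2 : ∑ x, ∑ y, (ind C x * ind C y) * π x y ≤ tri G i j * wA G αj j := by
      rw [← s6]
      exact mono (fun x y => ind C x * ind C y) (fun x y => ind C y)
        fun x y => mul_le_of_le_one_left (ind01 C y).1 (ind01 C x).2
    have r3 : ∑ x, ∑ y, (ind C x * ind C y) * π x y
        ≤ min (wA G αi i) (wA G αj j) * tri G i j := by
      rw [min_mul_of_nonneg _ _ (Nat.cast_nonneg _)]
      exact le_min (by linarith) (by linarith)
    have r4 : Q ≤ 2 * ∑ x, ∑ y, (ind C x * ind C y) * π x y + (Afun G αi i (tri G i j)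
        + Afun G αj j (tri G i j)) := by
      rw [hQ, ← s7, ← s8, ← add_assoc]
      simp only [Finset.mul_sum, ← Finset.sum_add_distrib]
      refine le_trans (mono _ _ fun x y => min_le_right _ _) (le_of_eq ?_)
      refine Finset.sum_congr rfl fun x _ => Finset.sum_congr rfl fun y _ => ?_
      ring
    linarith
  -- E
  have e1 : E ≤ (xiSet G i j).card * wA G αi i := by
    have hX : ∀ x ∈ xiSet G i j, G.Adj i x := fun x hx => hUi x (Finset.mem_filter.mp hx).1
    rw [hE, ← mGen_sum G αi hX, ← row_sum hπ]
    refine mono _ _ fun x y => ?_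
    unfold crossI
    split_ifs with h
    · have : x ∈ xiSet G i j := Finset.mem_filter.mpr ⟨h.1, y, h.2.1, h.2.2⟩
      simp [ind, this]
    · exact (ind01 _ x).1
  have e2 : E ≤ (xiSet G j i).card * wA G αj j := by
    have hX : ∀ x ∈ xiSet G j i, G.Adj j x := fun x hx => hUj x (Finset.mem_filter.mp hx).1
    rw [hE, ← mGen_sum G αj hX, ← col_sum hπ]
    refine mono (crossI G i j) (fun x y => ind (xiSet G j i) y) fun x y => ?_
    unfold crossI
    split_ifs with h
    · have : y ∈ xiSet G j i := Finset.mem_filter.mpr ⟨h.2.1, x, h.1, h.2.2.symm⟩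
      simp [ind, this]
    · exact (ind01 _ y).1
  have c1 : ((xiSet G i j).card : ℝ) ≤ (G.degree i : ℝ) - 1 - tri G i j := by
    rw [← hcu]; exact_mod_cast Finset.card_le_card (Finset.filter_subset _ _)
  have c2 : ((xiSet G j i).card : ℝ) ≤ (G.degree j : ℝ) - 1 - tri G i j := by
    rw [← hcu']; exact_mod_cast Finset.card_le_card (Finset.filter_subset _ _)
  have E1 : E ≤ Afun G αi i (tri G i j) :=
    e1.trans (mul_le_mul_of_nonneg_right c1 hwi.le)
  have E2 : E ≤ Afun G αj j (tri G i j) :=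
    e2.trans (mul_le_mul_of_nonneg_right c2 hwj.le)
  have E3 := par_le hwi hwj e1 e2
  have E4 := par_le hwi hwj E1 E2
  rw [← hSig] at E3 E4
  have hb : C4 G i j ≤ bBudget G i j z - frakT G i j * tri G i j := by
    have hne : rhoMin G i j ≠ 1 := by omega
    rw [cBF, if_neg hne] at hBF
    have : z - frakS G i j ≤ bBudget G i j z := le_max_left _ _
    linarith
  have hXi := Xi_le G hij
  have hth0 : 0 ≤ thStar G i j := by
    have : (1:ℝ) ≤ rhoMax G i j := by
      exact_mod_cast (by have := le_max_left (G.degree i) (G.degree j); unfold rhoMax; omega :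
        1 ≤ rhoMax G i j)
    unfold thStar
    exact mul_nonneg (by linarith) (by linarith)
  have E5 : E ≤ thStar G i j / SigmaA G αi αj i j
      * (bBudget G i j z - frakT G i j * tri G i j) := by
    refine E3.trans ?_
    rw [div_mul_eq_mul_div]
    refine div_le_div_of_nonneg_right ?_ hSig0.le
    have h1 : ((xiSet G i j).card : ℝ) + (xiSet G j i).card = (Xi G i j : ℝ) := by
      unfold Xi; push_cast; rfl
    rw [h1]
    exact hXi.2.trans (mul_le_mul_of_nonneg_left hb hth0)
  have E6 : E ≤ ((G.degree i : ℝ) + (G.degree j : ℝ) - 2 - 2 * tri G i j)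
      / SigmaA G αi αj i j := by
    refine E4.trans (le_of_eq ?_); congr 1; ring
  have EE := (le_min (le_min E1 E2) (le_min E5 E6)).trans (le_max_left _ (0:ℝ))
  have p1 := pair_pos αi ((1 - αj) / (G.degree j : ℝ))
  have p2 := pair_pos αj ((1 - αi) / (G.degree i : ℝ))
  have q3 : Q ≤ 2 * min (wA G αi i) (wA G αj j) * tri G i j +
      min (tri G i j * |wA G αi i - wA G αj j|)
        (Afun G αi i (tri G i j) + Afun G αj j (tri G i j)) := by
    rw [← min_add_add_left]
    refine le_min (q1.trans (le_of_eq ?_)) q2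
    have := two_min (wA G αi i) (wA G αj j)
    calc _ = (tri G i j : ℝ) * (wA G αi i + wA G αj j) := by ring
      _ = _ := by rw [← this]; ring
  have w1 : wA G αi i = (1 - αi) / (G.degree i : ℝ) := rfl
  have w2 : wA G αj j = (1 - αj) / (G.degree j : ℝ) := rfl
  unfold PsiHat
  change _ ≤ _ + pos _ + _
  unfold pos at p1 p2 ⊢
  linarith

/-- BF-to-OR upper transfer modulus
`c_OR(i,j) ≤ max_{t ∈ [0,△_max]} Ψ̂(t)`. -/
theorem stmt14 (hG : G.Connected) (i j : V) (hij : G.Adj i j)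
    (hmin : 2 ≤ rhoMin G i j) (αi αj : ℝ)
    (hαi : αi ∈ Set.Ico (0:ℝ) 1) (hαj : αj ∈ Set.Ico (0:ℝ) 1)
    (z : ℝ) (hBF : cBF G i j ≤ z) :
    1 - W1 G (mGen G αi i) (mGen G αj j)
      ≤ sSup ((fun t => PsiHat G αi αj i j z t) '' Set.Icc 0 (triBound G i j z)) := by
  have hdi : 2 ≤ G.degree i := le_trans hmin (min_le_left _ _)
  have hdj : 2 ≤ G.degree j := le_trans hmin (min_le_right _ _)
  have hW : 1 - PsiHat G αi αj i j z (tri G i j) ≤ W1 G (mGen G αi i) (mGen G αj j) := by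
    refine le_csInf ⟨_, _, prod_coupling (mGen_nonneg G hαi i) (mGen_nonneg G hαj j)
      (mGen_total G αi (by omega)) (mGen_total G αj (by omega)), rfl⟩ ?_
    rintro c ⟨π, hπ, rfl⟩
    have := cost_bound G hG i j hij hmin αi αj hαi hαj z hBF π hπ
    linarith
  have hcont : Continuous (fun t => PsiHat G αi αj i j z t) := by
    unfold PsiHat Afun pos
    fun_prop
  have hbdd := (isCompact_Icc (a := (0:ℝ)) (b := triBound G i j z)).bddAbove_image
    hcont.continuousOn
  have hmem : (tri G i j : ℝ) ∈ Set.Icc 0 (triBound G i j z) := by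
    refine ⟨Nat.cast_nonneg _, le_min ?_ ?_⟩
    · have a := card_uniq G hij
      have b := card_uniq G hij.symm
      have htri : tri G j i = tri G i j := by unfold tri; rw [Finset.inter_comm]
      rw [htri] at b
      have a0 : (0:ℝ) ≤ (uniq G i j).card := Nat.cast_nonneg _
      have b0 : (0:ℝ) ≤ (uniq G j i).card := Nat.cast_nonneg _
      unfold rhoMin
      push_cast
      rw [le_sub_iff_add_le]
      exact le_min (by linarith) (by linarith)
    · have hm : (0:ℝ) < rhoMin G i j := by exact_mod_cast (by omega : 0 < rhoMin G i j)
      have hT : 0 < frakT G i j := by unfold frakT; positivity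
      rw [le_div_iff₀ hT]
      have hne : rhoMin G i j ≠ 1 := by omega
      rw [cBF, if_neg hne] at hBF
      have : z - frakS G i j ≤ bBudget G i j z := le_max_left _ _
      have := (Xi_le G hij).1
      linarith
  have := le_csSup hbdd (Set.mem_image_of_mem _ hmem)
  linarith

end

end Curv
end

section
/- Let (i,j) ∈ E be an edge of a finite connected simple graph G, with lazy parameters α_u = 1/(ρ_u+1) and lazy measures m_i, m_j. Then there exists an optimal coupling π⋆ of m_i and m_j (i.e., one achieving W₁(m_i,m_j)) such that π⋆(k,k) = min{m_i(k), m_j(k)} for every k ∈ {i,j} ∪ (N(i) ∩ N(j)). In particular π⋆(i,i) = min{α_i, (1−α_j)/ρ_j}, π⋆(j,j) = min{α_j, (1−α_i)/ρ_i}, and π⋆(k,k) = min{(1−α_i)/ρ_i, (1−α_j)/ρ_j} for every common neighbor k ∈ N(i) ∩ N(j). -/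
namespace Curv

open Finset

noncomputable section

variable {V : Type*} [Fintype V] [DecidableEq V] (G : SimpleGraph V) [DecidableRel G.Adj]

theorem mLazy_prob (u v : V) (h : G.Adj u v) : IsProb (mLazy G u) := by
  have hd : 0 < G.degree u := (G.degree_pos_iff_exists_adj u).2 ⟨v, h⟩
  have hd' : (0:ℝ) < G.degree u := by exact_mod_cast hd
  have ha : alphaL G u ≤ 1 := by
    unfold alphaL
    exact inv_le_one_of_one_le₀ (by linarith)
  have ha0 : 0 ≤ alphaL G u := by unfold alphaL; positivity
  refine ⟨fun x => ?_, ?_⟩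
  · unfold mLazy mGen
    have h1 : 0 ≤ dirac u x := by unfold dirac; split_ifs <;> norm_num
    have h2 : 0 ≤ unif G u x := by unfold unif; split_ifs <;> positivity
    have := mul_nonneg ha0 h1
    have := mul_nonneg (sub_nonneg.2 ha) h2
    linarith
  · unfold mLazy mGen
    rw [Finset.sum_add_distrib, ← Finset.mul_sum, ← Finset.mul_sum]
    have h1 : ∑ x, dirac u x = 1 := by simp [dirac]
    have h2 : ∑ x, unif G u x = 1 := by
      simp only [unif]
      rw [← Finset.sum_filter, Finset.sum_const, ← SimpleGraph.neighborFinset_eq_filter,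
        SimpleGraph.card_neighborFinset_eq_degree, nsmul_eq_mul]
      exact mul_inv_cancel₀ hd'.ne'
    rw [h1, h2]; ring

theorem coupling_compact (μ ν : V → ℝ) : IsCompact {π : V → V → ℝ | IsCoupling μ ν π} := by
  have hc : IsCompact (Set.univ.pi fun x : V => Set.univ.pi fun _ : V => Set.Icc (0:ℝ) (μ x)) :=
    isCompact_univ_pi fun x => isCompact_univ_pi fun _ => isCompact_Icc
  refine hc.of_isClosed_subset ?_ ?_
  · simp only [IsCoupling, Set.setOf_and, Set.setOf_forall]
    refine IsClosed.inter ?_ (IsClosed.inter ?_ ?_)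
    · exact isClosed_iInter fun x => isClosed_iInter fun y =>
        isClosed_le continuous_const (by fun_prop)
    · exact isClosed_iInter fun x => isClosed_eq (by fun_prop) continuous_const
    · exact isClosed_iInter fun x => isClosed_eq (by fun_prop) continuous_const
  · rintro π ⟨h0, h1, -⟩ x - y -
    refine ⟨h0 x y, ?_⟩
    rw [← h1 x]
    exact Finset.single_le_sum (f := fun y => π x y) (fun z _ => h0 x z) (Finset.mem_univ y)

theorem exists_sat (hG : G.Connected) (μ ν : V → ℝ) (hμ : IsProb μ) (hν : IsProb ν) :
    ∃ π : V → V → ℝ, IsCoupling μ ν π ∧ cost G π = W1 G μ ν ∧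
      ∀ k, π k k = min (μ k) (ν k) := by
  have hK := coupling_compact μ ν
  have hne : {π : V → V → ℝ | IsCoupling μ ν π}.Nonempty := by
    refine ⟨fun x y => μ x * ν y, fun x y => mul_nonneg (hμ.1 x) (hν.1 y), fun x => ?_, fun y => ?_⟩
    · rw [← Finset.mul_sum, hν.2, mul_one]
    · rw [← Finset.sum_mul, hμ.2, one_mul]
  have hcc : Continuous (fun π : V → V → ℝ => cost G π) := by unfold cost; fun_prop
  obtain ⟨π₀, hπ₀, hmin⟩ := hK.exists_isMinOn hne hcc.continuousOn
  have hmin' : ∀ π, IsCoupling μ ν π → cost G π₀ ≤ cost G π := fun π h => hmin h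
  have hW : W1 G μ ν = cost G π₀ := by
    unfold W1
    refine IsLeast.csInf_eq ⟨⟨π₀, hπ₀, rfl⟩, ?_⟩
    rintro c ⟨π, h, rfl⟩
    exact hmin' π h
  have hK2 : IsCompact ({π : V → V → ℝ | IsCoupling μ ν π} ∩ {π | cost G π = cost G π₀}) :=
    hK.inter_right (isClosed_eq hcc continuous_const)
  have htc : Continuous (fun π : V → V → ℝ => ∑ x, π x x) := by fun_prop
  obtain ⟨π, ⟨hπ, hπc⟩, hmax⟩ := hK2.exists_isMaxOn ⟨π₀, hπ₀, rfl⟩ htc.continuousOn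
  have hmax' : ∀ π', IsCoupling μ ν π' → cost G π' = cost G π₀ → ∑ x, π' x x ≤ ∑ x, π x x :=
    fun π' h h' => hmax ⟨h, h'⟩
  have hπc : cost G π = cost G π₀ := hπc
  obtain ⟨h0, h1, h2⟩ : IsCoupling μ ν π := hπ
  refine ⟨π, ⟨h0, h1, h2⟩, by rw [hW, hπc], fun k => ?_⟩
  have hle1 : π k k ≤ μ k := by
    rw [← h1 k]
    exact Finset.single_le_sum (f := fun y => π k y) (fun z _ => h0 k z) (Finset.mem_univ k)
  have hle2 : π k k ≤ ν k := by
    rw [← h2 k]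
    exact Finset.single_le_sum (f := fun y => π y k) (fun z _ => h0 z k) (Finset.mem_univ k)
  refine le_antisymm (le_min hle1 hle2) ?_
  by_contra hlt
  rw [not_le, lt_min_iff] at hlt
  obtain ⟨hl1, hl2⟩ := hlt
  obtain ⟨a, hak, ha⟩ : ∃ a, a ≠ k ∧ 0 < π k a := by
    by_contra! hcon
    have : ∑ y, π k y = π k k := Finset.sum_eq_single k
      (fun b _ hb => le_antisymm (hcon b hb) (h0 k b)) (by simp)
    rw [h1] at this; linarith
  obtain ⟨b, hbk, hb⟩ : ∃ b, b ≠ k ∧ 0 < π b k := by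
    by_contra! hcon
    have : ∑ y, π y k = π k k := Finset.sum_eq_single k
      (fun b _ hb => le_antisymm (hcon b hb) (h0 b k)) (by simp)
    rw [h2] at this; linarith
  obtain ⟨ε, hε, hεa, hεb⟩ : ∃ ε : ℝ, 0 < ε ∧ ε ≤ π k a ∧ ε ≤ π b k :=
    ⟨min (π k a) (π b k), lt_min ha hb, min_le_left _ _, min_le_right _ _⟩
  let π' : V → V → ℝ := fun x y => π x y + ε * ((dirac k x - dirac b x) * (dirac k y - dirac a y))
  have hd : ∀ u : V, ∑ x, dirac u x = 1 := fun u => by simp [dirac]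
  have hd2 : ∀ (u : V) (f : V → ℝ), ∑ x, f x * dirac u x = f u := fun u f => by simp [dirac]
  have hc' : IsCoupling μ ν π' := by
    refine ⟨fun x y => ?_, fun x => ?_, fun y => ?_⟩
    · have h0xy := h0 x y
      simp only [π', dirac]
      by_cases hxk : x = k
      · subst hxk
        by_cases hya : y = a
        · subst hya; simp [hak, hbk.symm]; linarith
        · by_cases hyk : y = x
          · subst hyk; simp [hak.symm, hbk.symm]; linarith
          · simp [hya, hyk, h0xy]
      · by_cases hxb : x = b
        · subst hxb
          by_cases hyk : y = k
          · subst hyk; simp [hak.symm, hbk]; linarith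
          · by_cases hya : y = a
            · subst hya; simp [hak, hbk]; linarith
            · simp [hya, hyk, h0xy]
        · simp [hxk, hxb, h0xy]
    · simp only [π', Finset.sum_add_distrib, ← Finset.mul_sum, Finset.sum_sub_distrib, hd, h1]
      ring
    · simp only [π', Finset.sum_add_distrib, ← Finset.mul_sum, ← Finset.sum_mul,
        Finset.sum_sub_distrib, hd, h2]
      ring
  have hcost : cost G π' = cost G π + ε * ((G.dist b a : ℝ) - G.dist k a - G.dist b k) := by
    have e : ∀ x y, (G.dist x y : ℝ) * π' x y = G.dist x y * π x y +
        ε * ((G.dist x y * dirac k y - G.dist x y * dirac a y) * dirac k x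
          - (G.dist x y * dirac k y - G.dist x y * dirac a y) * dirac b x) := by
      intro x y; simp only [π']; ring
    simp only [cost, e, Finset.sum_add_distrib, ← Finset.mul_sum, ← Finset.sum_mul,
        Finset.sum_sub_distrib, hd2, SimpleGraph.dist_self]
    push_cast
    ring
  have htri : (G.dist b a : ℝ) ≤ G.dist b k + G.dist k a := by
    exact_mod_cast hG.dist_triangle
  have hle : cost G π' ≤ cost G π := by
    rw [hcost]; nlinarith
  have heq : cost G π' = cost G π₀ := le_antisymm (hle.trans hπc.le) (hmin' _ hc')
  have := hmax' _ hc' heq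
  have htr : ∑ x, π' x x = ∑ x, π x x + ε * (1 + dirac b a) := by
    have e : ∀ x, π' x x = π x x + ε * (dirac k x * dirac k x - dirac b x * dirac k x
        - dirac k x * dirac a x + dirac b x * dirac a x) := by
      intro x; simp only [π']; ring
    simp only [e, Finset.sum_add_distrib, ← Finset.mul_sum,
        Finset.sum_sub_distrib, hd2]
    simp [dirac, hak, hbk.symm]
  have hdn : 0 ≤ dirac b a := by unfold dirac; split_ifs <;> norm_num
  nlinarith

theorem mLazy_self (u : V) : mLazy G u u = alphaL G u := by
  simp [mLazy, mGen, dirac, unif]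

theorem mLazy_adj (u v : V) (h : G.Adj u v) :
    mLazy G u v = (1 - alphaL G u) / (G.degree u : ℝ) := by
  simp [mLazy, mGen, dirac, unif, h, h.ne', div_eq_mul_inv]

/-- existence of a diagonal-saturating optimal coupling for the lazy measures. -/
theorem stmt17 (hG : G.Connected) (i j : V) (hij : G.Adj i j) :
    ∃ π : V → V → ℝ, IsCoupling (mLazy G i) (mLazy G j) π ∧
      cost G π = W1 G (mLazy G i) (mLazy G j) ∧
      (∀ k, (k = i ∨ k = j ∨ (G.Adj i k ∧ G.Adj j k)) →
        π k k = min (mLazy G i k) (mLazy G j k)) ∧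
      π i i = min (alphaL G i) ((1 - alphaL G j) / (G.degree j : ℝ)) ∧
      π j j = min (alphaL G j) ((1 - alphaL G i) / (G.degree i : ℝ)) ∧
      (∀ k, G.Adj i k → G.Adj j k →
        π k k = min ((1 - alphaL G i) / (G.degree i : ℝ))
                    ((1 - alphaL G j) / (G.degree j : ℝ))) := by
  obtain ⟨π, h1, h2, h3⟩ := exists_sat G hG _ _ (mLazy_prob G i j hij) (mLazy_prob G j i hij.symm)
  refine ⟨π, h1, h2, fun k _ => h3 k, ?_, ?_, fun k hi hj => ?_⟩
  · rw [h3, mLazy_self, mLazy_adj G j i hij.symm]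
  · rw [h3, mLazy_self, mLazy_adj G i j hij, min_comm]
  · rw [h3, mLazy_adj G i k hi, mLazy_adj G j k hj]

end

end Curv
end

section
/- Let (i,j) ∈ E be an edge of a finite connected simple graph G with ρ_min ≥ 2, and suppose c_BF(i,j) ≥ ζ for some ζ ∈ ℝ. Then 𝔗(i,j)·△(i,j) + C₄(i,j) ≥ ζ − 𝔖(i,j); moreover C₄(i,j) ≥ [ζ − 𝔖(i,j) − 𝔗(i,j)·(ρ_min − 1)]₊ and 𝒮(i,j) ≥ (1/2)·[ζ − 𝔖(i,j) − 𝔗(i,j)·(ρ_min − 1)]₊, where [x]₊ = max{0,x}. -/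
namespace Curv

open Finset

noncomputable section

variable {V : Type*} [Fintype V] [DecidableEq V] (G : SimpleGraph V) [DecidableRel G.Adj]

theorem aux_exists_max (i j : V) : ∃ M : Finset (V × V), IsCrossMatching G i j M ∧
    M.card = matchNum G i j ∧ ∀ N, IsCrossMatching G i j N → N.card ≤ M.card := by
  have hb : BddAbove {n : ℕ | ∃ M : Finset (V × V), IsCrossMatching G i j M ∧ M.card = n} := by
    refine ⟨Fintype.card (V × V), ?_⟩
    rintro n ⟨M, _, rfl⟩
    exact Finset.card_le_univ M
  have hne : {n : ℕ | ∃ M : Finset (V × V), IsCrossMatching G i j M ∧ M.card = n}.Nonempty :=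
    ⟨0, ∅, by simp [IsCrossMatching], by simp⟩
  obtain ⟨M, hM, hc⟩ := Nat.sSup_mem hne hb
  refine ⟨M, hM, hc, fun N hN => ?_⟩
  rw [hc]
  exact le_csSup hb ⟨N, hN, rfl⟩

theorem aux_touch (i j : V) (M : Finset (V × V)) (hM : IsCrossMatching G i j M)
    (hmax : ∀ N, IsCrossMatching G i j N → N.card ≤ M.card) (k w : V)
    (hk : k ∈ uniq G i j) (hw : w ∈ uniq G j i) (ha : G.Adj k w) :
    ∃ p ∈ M, p.1 = k ∨ p.2 = w := by
  by_contra hcon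
  push Not at hcon
  have hnot : (k, w) ∉ M := fun h => (hcon _ h).1 rfl
  have := hmax (insert (k, w) M) ⟨by
      intro p hp
      rcases Finset.mem_insert.1 hp with rfl | hp
      · exact ⟨hk, hw, ha⟩
      · exact hM.1 p hp, by
      intro p hp q hq hpq
      rcases Finset.mem_insert.1 hp with rfl | hp <;> rcases Finset.mem_insert.1 hq with rfl | hq
      · exact absurd rfl hpq
      · exact ⟨(hcon q hq).1.symm, (hcon q hq).2.symm⟩
      · exact hcon p hp
      · exact hM.2 p hp q hq hpq⟩
  rw [Finset.card_insert_of_notMem hnot] at this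
  omega

theorem aux_uniq_mem (u v w : V) (hw : w ∈ uniq G u v) : w ∈ (G.neighborFinset u).erase v := by
  simp only [uniq, Finset.mem_sdiff, Finset.mem_insert, not_or] at hw
  exact Finset.mem_erase.2 ⟨hw.2.1, hw.1⟩

theorem aux_Xi (i j : V) : Xi G i j ≤ 2 * (matchNum G i j * varpi G i j) := by
  obtain ⟨M, hM, hc, hmax⟩ := aux_exists_max G i j
  have ht := aux_touch G i j M hM hmax
  rw [← hc]
  have h1 : (xiSet G i j).card ≤ M.card * varpi G i j := by
    refine le_trans (Finset.card_le_card (t := M.biUnion fun p =>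
      G.neighborFinset p.2 ∩ uniq G i j) ?_) (Finset.card_biUnion_le_card_mul _ _ _ ?_)
    · intro k hk
      simp only [xiSet, Finset.mem_filter] at hk
      obtain ⟨hk, w, hw, ha⟩ := hk
      obtain ⟨p, hp, h⟩ := ht k w hk hw ha
      simp only [Finset.mem_biUnion, Finset.mem_inter, SimpleGraph.mem_neighborFinset]
      refine ⟨p, hp, ?_, hk⟩
      rcases h with rfl | rfl
      · exact (hM.1 p hp).2.2.symm
      · exact ha.symm
    · intro p hp
      exact le_trans (Finset.le_sup (f := fun w => boxT G w j i)
        (aux_uniq_mem G j i p.2 (hM.1 p hp).2.1)) (le_max_right _ _)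
  have h2 : (xiSet G j i).card ≤ M.card * varpi G i j := by
    refine le_trans (Finset.card_le_card (t := M.biUnion fun p =>
      G.neighborFinset p.1 ∩ uniq G j i) ?_) (Finset.card_biUnion_le_card_mul _ _ _ ?_)
    · intro w hw
      simp only [xiSet, Finset.mem_filter] at hw
      obtain ⟨hw, k, hk, ha⟩ := hw
      obtain ⟨p, hp, h⟩ := ht k w hk hw ha.symm
      simp only [Finset.mem_biUnion, Finset.mem_inter, SimpleGraph.mem_neighborFinset]
      refine ⟨p, hp, ?_, hw⟩
      rcases h with rfl | rfl
      · exact ha.symm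
      · exact (hM.1 p hp).2.2
    · intro p hp
      exact le_trans (Finset.le_sup (f := fun w => boxT G w i j)
        (aux_uniq_mem G i j p.1 (hM.1 p hp).1)) (le_max_left _ _)
  unfold Xi
  omega

theorem aux_tri (i j : V) (hij : G.Adj i j) : tri G i j + 1 ≤ rhoMin G i j := by
  have h1 : tri G i j < G.degree i := by
    rw [← SimpleGraph.card_neighborFinset_eq_degree]
    refine Finset.card_lt_card ⟨Finset.inter_subset_left, fun h => ?_⟩
    have := h ((G.mem_neighborFinset i j).2 hij)
    simp at this
  have h2 : tri G i j < G.degree j := by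
    rw [← SimpleGraph.card_neighborFinset_eq_degree]
    refine Finset.card_lt_card ⟨Finset.inter_subset_right, fun h => ?_⟩
    have := h ((G.mem_neighborFinset j i).2 hij.symm)
    simp at this
  exact le_min h1 h2

theorem aux_SS (i j : V) : C4 G i j ≤ 2 * SS G i j := by
  have hS : 0 ≤ SS G i j := by unfold SS; positivity
  unfold C4
  split_ifs with h
  · have hx := aux_Xi G i j
    have hv : 0 < varpi G i j := by
      rcases Nat.eq_zero_or_pos (varpi G i j) with h0 | h0
      · rw [h0] at hx; omega
      · exact h0
    have hv' : (0 : ℝ) < varpi G i j := by exact_mod_cast hv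
    have hx' : (Xi G i j : ℝ) ≤ 2 * (matchNum G i j * varpi G i j) := by exact_mod_cast hx
    unfold SS thMax
    change _ / ((varpi G i j * rhoMax G i j : ℕ) : ℝ) ≤ _
    push_cast
    rw [← div_div, ← mul_div_assoc]
    refine div_le_div_of_nonneg_right ?_ (Nat.cast_nonneg _)
    rw [div_le_iff₀ hv']
    linarith
  · linarith

/-- budget inequalities forced by a BF lower level `ζ`. -/
theorem stmt19 (hG : G.Connected) (i j : V) (hij : G.Adj i j)
    (hmin : 2 ≤ rhoMin G i j) (z : ℝ) (hBF : cBF G i j ≥ z) :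
    (frakT G i j * (tri G i j : ℝ) + C4 G i j ≥ z - frakS G i j) ∧
    (C4 G i j ≥ pos (z - frakS G i j - frakT G i j * ((rhoMin G i j : ℝ) - 1))) ∧
    (SS G i j ≥ (1 / 2) * pos (z - frakS G i j - frakT G i j * ((rhoMin G i j : ℝ) - 1))) := by
  have hb : z ≤ frakS G i j + frakT G i j * (tri G i j : ℝ) + C4 G i j := by
    have h : cBF G i j = frakS G i j + frakT G i j * (tri G i j : ℝ) + C4 G i j := by
      unfold cBF
      rw [if_neg (by omega)]
    linarith
  have hC : 0 ≤ C4 G i j := by unfold C4; split_ifs <;> positivity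
  have hT : 0 ≤ frakT G i j := by unfold frakT; positivity
  have ht : (tri G i j : ℝ) ≤ (rhoMin G i j : ℝ) - 1 := by
    have : ((tri G i j + 1 : ℕ) : ℝ) ≤ rhoMin G i j := by exact_mod_cast aux_tri G i j hij
    push_cast at this
    linarith
  have hm := mul_le_mul_of_nonneg_left ht hT
  have h2 : pos (z - frakS G i j - frakT G i j * ((rhoMin G i j : ℝ) - 1)) ≤ C4 G i j :=
    max_le (by linarith) hC
  have h3 := aux_SS G i j
  exact ⟨by linarith, h2, by linarith⟩

end

end Curv
end
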